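/- Let c be a negative integer and suppose that c = L_n − 2^x·3^y = L_{n₁} − 2^{x₁}·3^{y₁} for nonnegative integers n, n₁, x, x₁, y, y₁ with n₁ < n ≤ 500. Then x < 382 and y < 241. -/

import Mathlib

/-- The Lucas sequence: L 0 = 2, L 1 = 1, L (n+2) = L (n+1) + L n. -/
def lucas : ℕ → ℤ
  | 0 => 2
  | 1 => 1
  | n + 2 => lucas (n + 1) + lucas n

/-!
Put `D = |L_n - L_{n₁}| = |2 ^ x * 3 ^ y - 2 ^ x₁ * 3 ^ y₁|`. Dividing by the common powers of `2`
and `3` leaves either a term `1`, so that the products are at most `2 D`, or a power of `2` and a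
power of `3`. If both exponents are large in the second case, then `|2 ^ u - 3 ^ w|` is prime to
`6`, hence it is the part of `D` prime to `6`, a number that depends on `n` and `n₁` only. A sieve
modulo a few small numbers shows that for indices up to `500` this number is never such a gap. So
one of the exponents is small and again the products are at most a constant times
`D < L_500 < 2 ^ 348`.
-/

section PowerGap

/-- `e` is the distance of a power of `2` and a power of `3` whose exponents both exceed `s`. -/
def IsPowerGap (s e : ℕ) : Prop :=
  ∃ u > s, ∃ w > s, Nat.dist (2 ^ u) (3 ^ w) = e

/-- The part of `D` prime to `6`, if `D < 2 ^ k`: this bounds the exponents of `2` and `3` in `D`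
by `k`. -/
def sixFreePart (k D : ℕ) : ℕ :=
  D / D.gcd (6 ^ k)

variable {s k e : ℕ}

theorem IsPowerGap.coprime_six (h : IsPowerGap s e) : e.Coprime 6 := by
  obtain ⟨u, hu, w, hw, rfl⟩ := h
  have two_dvd : 2 ∣ 2 ^ u := dvd_pow_self 2 (by omega)
  have three_dvd : 3 ∣ 3 ^ w := dvd_pow_self 3 (by omega)
  have two_ndvd : ¬ 2 ∣ 3 ^ w := fun h ↦ by simpa using Nat.prime_two.dvd_of_dvd_pow h
  have three_ndvd : ¬ 3 ∣ 2 ^ u := fun h ↦ by simpa using Nat.prime_three.dvd_of_dvd_pow h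
  refine (Nat.coprime_mul_iff_right (m := 2) (n := 3)).2 ⟨?_, ?_⟩ <;> rw [Nat.coprime_comm]
  · exact Nat.prime_two.coprime_iff_not_dvd.2 (by unfold Nat.dist; omega)
  · exact Nat.prime_three.coprime_iff_not_dvd.2 (by unfold Nat.dist; omega)

theorem sixFreePart_two_pow_mul_three_pow_mul {a b : ℕ} (he : e.Coprime 6) (ha : a ≤ k)
    (hb : b ≤ k) : sixFreePart k (2 ^ a * 3 ^ b * e) = e := by
  have hdvd : 2 ^ a * 3 ^ b ∣ 6 ^ k := by
    rw [show 6 = 2 * 3 from rfl, mul_pow]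
    exact mul_dvd_mul (pow_dvd_pow 2 ha) (pow_dvd_pow 3 hb)
  rw [sixFreePart, (he.pow_right k).gcd_mul_right_cancel, Nat.gcd_eq_left hdvd,
    Nat.mul_div_cancel_left _ (by positivity)]

theorem two_pow_le_and_three_pow_le_of_not_isPowerGap {u w : ℕ}
    (he : Nat.dist (2 ^ u) (3 ^ w) = e) (hpos : 0 < e) (h : ¬ IsPowerGap s e) :
    2 ^ u ≤ (3 ^ s + 1) * e ∧ 3 ^ w ≤ (3 ^ s + 1) * e := by
  have hsmall : 2 ^ u ≤ 3 ^ s ∨ 3 ^ w ≤ 3 ^ s := by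
    by_cases hu : u ≤ s
    · exact .inl ((Nat.pow_le_pow_right two_pos hu).trans (Nat.pow_le_pow_left (by norm_num) s))
    · refine .inr (Nat.pow_le_pow_right three_pos ?_)
      by_contra hw
      exact h ⟨u, not_le.1 hu, w, not_le.1 hw, he⟩
  have hbound : 3 ^ s + e ≤ (3 ^ s + 1) * e := by
    rw [add_one_mul]
    exact Nat.add_le_add_right (Nat.le_mul_of_pos_right _ hpos) e
  have hleft : 3 ^ w ≤ 2 ^ u + e := he ▸ Nat.dist_tri_right _ _
  have hright : 2 ^ u ≤ 3 ^ w + e := he ▸ Nat.dist_tri_right' _ _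
  omega

theorem mul_two_pow_le_and_mul_three_pow_le {D a b u w : ℕ}
    (hD : Nat.dist (2 ^ a * 3 ^ b * 2 ^ u) (2 ^ a * 3 ^ b * 3 ^ w) = D) (hpos : 0 < D)
    (hlt : D < 2 ^ k) (h : ¬ IsPowerGap s (sixFreePart k D)) :
    2 ^ a * 3 ^ b * 2 ^ u ≤ (3 ^ s + 1) * D ∧ 2 ^ a * 3 ^ b * 3 ^ w ≤ (3 ^ s + 1) * D := by
  rw [Nat.dist_mul_left] at hD
  subst hD
  have hpos_gap : 0 < Nat.dist (2 ^ u) (3 ^ w) := Nat.pos_of_mul_pos_left hpos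
  have hfactor : 2 ^ a * 3 ^ b < 2 ^ k := (Nat.le_mul_of_pos_right _ hpos_gap).trans_lt hlt
  have ha : a < k := (Nat.pow_lt_pow_iff_right one_lt_two).1
    ((Nat.le_mul_of_pos_right _ (by positivity)).trans_lt hfactor)
  have hb : b < k := (Nat.pow_lt_pow_iff_right one_lt_two).1
    ((Nat.pow_le_pow_left (by norm_num) b).trans_lt
      ((Nat.le_mul_of_pos_left _ (by positivity)).trans_lt hfactor))
  have hgap : ¬ IsPowerGap s (Nat.dist (2 ^ u) (3 ^ w)) := fun hg ↦
    h (by rwa [sixFreePart_two_pow_mul_three_pow_mul hg.coprime_six ha.le hb.le])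
  obtain ⟨hu, hw⟩ := two_pow_le_and_three_pow_le_of_not_isPowerGap rfl hpos_gap hgap
  rw [mul_left_comm]
  exact ⟨Nat.mul_le_mul_left _ hu, Nat.mul_le_mul_left _ hw⟩

theorem le_two_mul_dist_of_dvd {a b : ℕ} (h : a ∣ b) (hne : a ≠ b) :
    a ≤ 2 * Nat.dist a b ∧ b ≤ 2 * Nat.dist a b := by
  obtain ⟨c, rfl⟩ := h
  obtain rfl | rfl | hc : c = 0 ∨ c = 1 ∨ 2 ≤ c := by omega
  · simp only [mul_zero, Nat.dist_zero_right]; omega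
  · exact absurd (mul_one a).symm hne
  · have := Nat.mul_le_mul_left a hc
    unfold Nat.dist; omega

theorem two_pow_mul_three_pow_le_of_not_isPowerGap {D x y x₁ y₁ : ℕ}
    (hD : Nat.dist (2 ^ x * 3 ^ y) (2 ^ x₁ * 3 ^ y₁) = D) (hpos : 0 < D)
    (hlt : D < 2 ^ k) (h : ¬ IsPowerGap s (sixFreePart k D)) :
    2 ^ x * 3 ^ y ≤ (3 ^ s + 1) * D := by
  have hne : 2 ^ x * 3 ^ y ≠ 2 ^ x₁ * 3 ^ y₁ := fun h ↦ hpos.ne' (hD ▸ Nat.dist_eq_zero h)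
  have htwo : 2 * D ≤ (3 ^ s + 1) * D :=
    Nat.mul_le_mul_right D (Nat.succ_le_succ (Nat.one_le_pow' s 2))
  rcases le_total x x₁ with hx | hx <;> rcases le_total y y₁ with hy | hy
  · have hdvd := mul_dvd_mul (pow_dvd_pow 2 hx) (pow_dvd_pow 3 hy)
    exact (hD ▸ (le_two_mul_dist_of_dvd hdvd hne).1).trans htwo
  · obtain ⟨u, rfl⟩ := Nat.exists_eq_add_of_le hx
    obtain ⟨w, rfl⟩ := Nat.exists_eq_add_of_le hy
    rw [Nat.dist_comm] at hD
    rw [show 2 ^ x * 3 ^ (y₁ + w) = 2 ^ x * 3 ^ y₁ * 3 ^ w by ring] at hD ⊢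
    rw [show 2 ^ (x + u) * 3 ^ y₁ = 2 ^ x * 3 ^ y₁ * 2 ^ u by ring] at hD
    exact (mul_two_pow_le_and_mul_three_pow_le hD hpos hlt h).2
  · obtain ⟨u, rfl⟩ := Nat.exists_eq_add_of_le hx
    obtain ⟨w, rfl⟩ := Nat.exists_eq_add_of_le hy
    rw [show 2 ^ (x₁ + u) * 3 ^ y = 2 ^ x₁ * 3 ^ y * 2 ^ u by ring] at hD ⊢
    rw [show 2 ^ x₁ * 3 ^ (y + w) = 2 ^ x₁ * 3 ^ y * 3 ^ w by ring] at hD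
    exact (mul_two_pow_le_and_mul_three_pow_le hD hpos hlt h).1
  · have hdvd := mul_dvd_mul (pow_dvd_pow 2 hx) (pow_dvd_pow 3 hy)
    rw [Nat.dist_comm] at hD
    exact (hD ▸ (le_two_mul_dist_of_dvd hdvd hne.symm).2).trans htwo

end PowerGap

section Sieve

variable {s m P Q e : ℕ}

theorem pow_modEq_pow_mod_add {a T t : ℕ} (h : a ^ (T + t) ≡ a ^ t [MOD m]) (k : ℕ) :
    a ^ (k + t) ≡ a ^ (k % T + t) [MOD m] := by
  have periodic : Function.Periodic (fun k ↦ a ^ (k + t) % m) T := fun k ↦ by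
    simpa only [Nat.ModEq, pow_add, mul_assoc] using h.mul_left (a ^ k)
  exact (periodic.map_mod_nat k).symm

/-- The residues mod `m` of `± (3 ^ w - 2 ^ u)` with `u` in the first `P` and `w` in the first `Q`
integers above `s`. -/
def gapResidues (s m P Q : ℕ) : List ℕ :=
  (List.range P).flatMap fun i ↦ (List.range Q).flatMap fun j ↦
    [((3 ^ (j + (s + 1)) - 2 ^ (i + (s + 1)) : ℤ) % m).toNat,
      ((2 ^ (i + (s + 1)) - 3 ^ (j + (s + 1)) : ℤ) % m).toNat]

theorem IsPowerGap.mod_mem_gapResidues (h : IsPowerGap s e) (hP : 0 < P) (hQ : 0 < Q)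
    (two_periodic : 2 ^ (P + (s + 1)) ≡ 2 ^ (s + 1) [MOD m])
    (three_periodic : 3 ^ (Q + (s + 1)) ≡ 3 ^ (s + 1) [MOD m]) :
    e % m ∈ gapResidues s m P Q := by
  obtain ⟨u, hu, w, hw, rfl⟩ := h
  obtain ⟨i, rfl⟩ := Nat.exists_eq_add_of_le' hu
  obtain ⟨j, rfl⟩ := Nat.exists_eq_add_of_le' hw
  have htwo := Int.natCast_modEq_iff.2 (pow_modEq_pow_mod_add two_periodic i)
  have hthree := Int.natCast_modEq_iff.2 (pow_modEq_pow_mod_add three_periodic j)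
  have toNat_emod (d : ℕ) (z : ℤ) (hd : (d : ℤ) ≡ z [ZMOD m]) : d % m = (z % m).toNat := by
    rw [← hd.eq, ← Int.natCast_mod, Int.toNat_natCast]
  simp only [gapResidues, List.mem_flatMap, List.mem_range, List.mem_cons,
    List.not_mem_nil, or_false]
  refine ⟨i % P, Nat.mod_lt _ hP, j % Q, Nat.mod_lt _ hQ, ?_⟩
  rcases le_total (2 ^ (i + (s + 1))) (3 ^ (j + (s + 1))) with hle | hle
  · refine .inl (toNat_emod _ _ ?_)
    rw [Nat.dist_eq_sub_of_le hle, Nat.cast_sub hle]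
    exact_mod_cast hthree.sub htwo
  · refine .inr (toNat_emod _ _ ?_)
    rw [Nat.dist_eq_sub_of_le_right hle, Nat.cast_sub hle]
    exact_mod_cast htwo.sub hthree

/-- The natural number whose binary digits `1` are at the positions listed in `l`, as a set of
natural numbers with fast membership test. -/
def bitSet (l : List ℕ) : ℕ :=
  l.foldr (fun r s ↦ s ||| 2 ^ r) 0

/-- The test `r ∉ s` for a bit set `s`. -/
def bitClear (s r : ℕ) : Bool :=
  (s >>> r % 2).beq 0

theorem bitClear_bitSet_eq_false {l : List ℕ} {r : ℕ} (h : r ∈ l) :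
    bitClear (bitSet l) r = false := by
  have htest : (bitSet l).testBit r = true := by
    induction l with
    | nil => simp at h
    | cons a l ih =>
      simp only [bitSet, List.foldr_cons, Nat.testBit_or, Bool.or_eq_true, Nat.testBit_two_pow,
        decide_eq_true_eq]
      rcases List.mem_cons.1 h with rfl | h
      · exact .inr rfl
      · exact .inl (ih h)
  rw [Nat.testBit_eq_decide_div_mod_eq, decide_eq_true_eq, ← Nat.shiftRight_eq_div_pow] at htest
  rw [bitClear, htest]; rfl

theorem IsPowerGap.bitClear_gapResidues (h : IsPowerGap s e) (hP : 0 < P) (hQ : 0 < Q)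
    (two_periodic : 2 ^ (P + (s + 1)) ≡ 2 ^ (s + 1) [MOD m])
    (three_periodic : 3 ^ (Q + (s + 1)) ≡ 3 ^ (s + 1) [MOD m]) :
    bitClear (bitSet (gapResidues s m P Q)) (e % m) = false :=
  bitClear_bitSet_eq_false (h.mod_mem_gapResidues hP hQ two_periodic three_periodic)

theorem exists_pow_add_pow_modEq_one {a b c p t T g u w : ℕ} (hT : 0 < T)
    (ha : a ^ T ≡ 1 [MOD b ^ t * p]) (hb : b ^ g ≡ 1 [MOD p]) (hw : t ≤ w)
    (h : b ^ w ≡ a ^ u + c [MOD b ^ t * p]) :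
    ∃ i < T, b ^ t ∣ a ^ i + c ∧ (a ^ i + c) ^ g ≡ 1 [MOD p] := by
  have periodic : a ^ u ≡ a ^ (u % T) [MOD b ^ t * p] := pow_modEq_pow_mod_add (t := 0) ha u
  replace h := h.trans (periodic.add_right c)
  refine ⟨u % T, Nat.mod_lt _ hT, ?_, ?_⟩
  · exact ((h.of_mul_right p).dvd_iff dvd_rfl).1 (pow_dvd_pow b hw)
  · have hone : (b ^ w) ^ g ≡ 1 [MOD p] := by
      rw [pow_right_comm]
      simpa only [one_pow] using hb.pow w
    exact ((h.of_mul_left (b ^ t)).pow g).symm.trans hone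

/-- The differences `2 ^ 8 - 3 ^ 5`, `3 ^ 4 - 2 ^ 6`, `2 ^ 6 - 3 ^ 3`, `2 ^ 7 - 3 ^ 4`,
`2 ^ 9 - 3 ^ 4` and `2 ^ 15 - 3 ^ 6`, the only parts prime to `6` of differences of Lucas numbers
with indices up to `500` that the bit sets of `sievedOut` leave. -/
def smallGaps : List ℕ :=
  [13, 17, 37, 47, 431, 32039]

-- The order of `2` is `1458` modulo `3 ^ 7` and divides `1458` modulo the prime
-- `97687 = 9 * 10854 + 1`, modulo which `3` is a ninth power. The congruence `2 ^ u ± e ≡ 0` modulo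
-- `3 ^ 7` determines `u` modulo `1458`, and then `2 ^ u ± e` is no ninth power modulo `97687`.
theorem not_isPowerGap_of_mem_smallGaps (he : e ∈ smallGaps) : ¬ IsPowerGap 6 e := by
  rintro ⟨u, -, w, hw, hdist⟩
  have hle : ∀ e ∈ smallGaps, e ≤ 3 ^ 7 * 97687 := by decide
  obtain ⟨c, hc, hcongr⟩ :
      ∃ c ∈ [e, 3 ^ 7 * 97687 - e], 3 ^ w ≡ 2 ^ u + c [MOD 3 ^ 7 * 97687] := by
    rcases le_total (2 ^ u) (3 ^ w) with h | h
    · refine ⟨e, by simp, ?_⟩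
      rw [← hdist, Nat.dist_eq_sub_of_le h, Nat.add_sub_cancel' h]
    · refine ⟨3 ^ 7 * 97687 - e, by simp, ?_⟩
      rw [Nat.dist_eq_sub_of_le_right h] at hdist
      have := hle e he
      rw [show 2 ^ u + (3 ^ 7 * 97687 - e) = 3 ^ w + 3 ^ 7 * 97687 by omega]
      exact Nat.add_modEq_right.symm
  obtain ⟨i, hi, hdvd, hpow⟩ := exists_pow_add_pow_modEq_one (T := 1458) (g := 10854)
    (by norm_num) (by decide +kernel) (by decide +kernel) hw hcongr
  have no_residue : ∀ e ∈ smallGaps, ∀ c ∈ [e, 3 ^ 7 * 97687 - e], ∀ i ∈ List.range 1458,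
      3 ^ 7 ∣ 2 ^ i + c → ¬ ((2 ^ i + c) % 97687) ^ 10854 ≡ 1 [MOD 97687] := by
    decide +kernel
  exact no_residue e he c hc i (List.mem_range.2 hi) hdvd
    (((Nat.mod_modEq _ _).pow 10854).trans hpow)

/-- The certificate that `e` is no power gap: one of the bit sets `s₁`, `s₂`, `s₃` misses its
residue, or it is one of the `smallGaps`. The powers of `2` and `3` have short periods modulo
`16320 = 2 ^ 6 * 3 * 5 * 17`, `220752 = 2 ^ 4 * 3 ^ 3 * 7 * 73` and
`46683 = 3 ^ 3 * 7 * 13 * 19`. -/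
def sievedOut (s₁ s₂ s₃ e : ℕ) : Bool :=
  bitClear s₁ (e % 16320) || (bitClear s₂ (e % 220752) || (bitClear s₃ (e % 46683) ||
    smallGaps.contains e))

theorem not_isPowerGap_of_sievedOut
    (h : sievedOut (bitSet (gapResidues 6 16320 8 16)) (bitSet (gapResidues 6 220752 18 12))
      (bitSet (gapResidues 6 46683 36 18)) e) : ¬ IsPowerGap 6 e := by
  intro hgap
  rw [sievedOut, hgap.bitClear_gapResidues (by norm_num) (by norm_num) (by decide) (by decide),
    hgap.bitClear_gapResidues (by norm_num) (by norm_num) (by decide) (by decide),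
    hgap.bitClear_gapResidues (by norm_num) (by norm_num) (by decide) (by decide),
    Bool.false_or, Bool.false_or, Bool.false_or, List.contains_iff_mem] at h
  exact not_isPowerGap_of_mem_smallGaps h hgap

end Sieve

section AdditiveSequence

/-- `f n`, written so that the kernel reduces `n` to a numeral before it unfolds `f`. -/
def evalThen {α : Type} (n : ℕ) (f : ℕ → α) : α :=
  Nat.rec (f 0) (fun k _ ↦ f k.succ) n

theorem evalThen_eq {α : Type} (n : ℕ) (f : ℕ → α) : evalThen n f = f n := by
  cases n <;> rfl

/-- `P` holds for the first `k` terms of the sequence that starts with `p`, `q` and in which each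
term is the sum of the two before it. -/
def allAdditive (P : ℕ → Bool) : ℕ → ℕ → ℕ → Bool
  | 0, _, _ => true
  | k + 1, p, q => P p && evalThen (p + q) (allAdditive P k q)

/-- `P` holds for all pairs among the first `k` terms of the sequence that starts with `p`, `q` and
in which each term is the sum of the two before it. -/
def allAdditivePairs (P : ℕ → ℕ → Bool) : ℕ → ℕ → ℕ → Bool
  | 0, _, _ => true
  | k + 1, p, q => evalThen (p + q) fun r ↦ allAdditive (P p) k q r && allAdditivePairs P k q r

variable {f : ℕ → ℕ} {k : ℕ}

theorem of_allAdditive {P : ℕ → Bool} (hf : ∀ n, f (n + 2) = f n + f (n + 1))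
    (h : allAdditive P k (f 0) (f 1)) : ∀ i < k, P (f i) := by
  induction k generalizing f with
  | zero => simp
  | succ k ih =>
    rw [allAdditive, evalThen_eq, ← hf 0, Bool.and_eq_true] at h
    rintro (_ | i) hi
    · exact h.1
    · exact ih (f := fun n ↦ f (n + 1)) (fun n ↦ hf (n + 1)) h.2 i (by omega)

theorem of_allAdditivePairs {P : ℕ → ℕ → Bool} (hf : ∀ n, f (n + 2) = f n + f (n + 1))
    (h : allAdditivePairs P k (f 0) (f 1)) : ∀ j < k, ∀ i < j, P (f i) (f j) := by
  induction k generalizing f with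
  | zero => simp
  | succ k ih =>
    rw [allAdditivePairs, evalThen_eq, ← hf 0, Bool.and_eq_true] at h
    have hf' (n : ℕ) : f (n + 1 + 2) = f (n + 1) + f (n + 2) := hf (n + 1)
    rintro (_ | j) hj i hi
    · omega
    rcases i with _ | i
    · exact of_allAdditive (f := fun n ↦ f (n + 1)) hf' h.1 j (by omega)
    · exact ih (f := fun n ↦ f (n + 1)) hf' h.2 j (by omega) i (by omega)

end AdditiveSequence

section Lucas

theorem lucas_pos : ∀ n, 0 < lucas n
  | 0 => by decide
  | 1 => by decide
  | n + 2 => add_pos (lucas_pos (n + 1)) (lucas_pos n)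

theorem lucas_injective : Function.Injective lucas := by
  have mono : StrictMono fun n ↦ lucas (n + 1) :=
    strictMono_nat_of_lt_succ fun n ↦ lt_add_of_pos_right _ (lucas_pos n)
  have ne_two : ∀ n, lucas (n + 1) ≠ 2
    | 0 => by decide
    | n + 1 => ((show 2 < lucas 2 by decide).trans_le (mono.monotone n.succ_pos)).ne'
  rintro (_ | i) (_ | j) h
  · rfl
  · exact absurd h.symm (ne_two j)
  · exact absurd h (ne_two i)
  · rw [mono.injective h]

theorem toNat_lucas_injective : Function.Injective fun n ↦ (lucas n).toNat := fun m n h ↦ by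
  have := lucas_pos m
  have := lucas_pos n
  exact lucas_injective (by dsimp only at h; omega)

theorem toNat_lucas_add_two (n : ℕ) :
    (lucas (n + 2)).toNat = (lucas n).toNat + (lucas (n + 1)).toNat := by
  rw [lucas, add_comm, Int.toNat_add (lucas_pos _).le (lucas_pos _).le]

set_option exponentiation.threshold 400 in
theorem toNat_lucas_lt {n : ℕ} (hn : n ≤ 500) : (lucas n).toNat < 2 ^ 348 := by
  have check : allAdditive (fun a ↦ a.blt (2 ^ 348)) 501 2 1 = true := by decide +kernel
  simpa only [Nat.blt_eq] using of_allAdditive (f := fun n ↦ (lucas n).toNat) toNat_lucas_add_two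
    check n (by omega)

theorem sievedOut_dist_lucas :
    (evalThen (bitSet (gapResidues 6 16320 8 16)) fun s₁ ↦
    evalThen (bitSet (gapResidues 6 220752 18 12)) fun s₂ ↦
    evalThen (bitSet (gapResidues 6 46683 36 18)) fun s₃ ↦
    allAdditivePairs (fun p q ↦ evalThen (Nat.dist p q) fun D ↦
      evalThen (sixFreePart 348 D) (sievedOut s₁ s₂ s₃)) 501 2 1) = true := by
  decide +kernel

theorem not_isPowerGap_sixFreePart_dist_lucas {m n : ℕ} (hm : m ≤ 500) (hn : n ≤ 500)
    (hne : m ≠ n) :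
    ¬ IsPowerGap 6 (sixFreePart 348 (Nat.dist (lucas m).toNat (lucas n).toNat)) := by
  wlog hlt : m < n generalizing m n
  · rw [Nat.dist_comm]
    exact this hn hm hne.symm (by omega)
  have check := sievedOut_dist_lucas
  simp only [evalThen_eq] at check
  exact not_isPowerGap_of_sievedOut
    (of_allAdditivePairs (f := fun n ↦ (lucas n).toNat) toNat_lucas_add_two check n (by omega)
      m hlt)

end Lucas

set_option exponentiation.threshold 400 in
theorem neg_c_small_n_xy_bound_general (c : ℤ) (n n₁ x x₁ y y₁ : ℕ)
    (h1 : c = lucas n - 2 ^ x * 3 ^ y) (h2 : c = lucas n₁ - 2 ^ x₁ * 3 ^ y₁)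
    (hne : n ≠ n₁) (hn : n ≤ 500) (hn₁ : n₁ ≤ 500) :
    x < 358 ∧ y < 226 := by
  set D := Nat.dist (lucas n).toNat (lucas n₁).toNat with hD
  have hdist : Nat.dist (2 ^ x * 3 ^ y) (2 ^ x₁ * 3 ^ y₁) = D := by
    refine Nat.dist_eq_intro ?_
    zify
    rw [Int.toNat_of_nonneg (lucas_pos n).le, Int.toNat_of_nonneg (lucas_pos n₁).le]
    linarith
  have hpos : 0 < D := Nat.dist_pos_of_ne (toNat_lucas_injective.ne hne)
  have hlt : D < 2 ^ 348 := by
    rw [hD, Nat.dist_eq_max_sub_min]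
    exact (Nat.sub_le _ _).trans_lt (max_lt (toNat_lucas_lt hn) (toNat_lucas_lt hn₁))
  have hsize : 2 ^ x * 3 ^ y < 2 ^ 358 := by
    have := two_pow_mul_three_pow_le_of_not_isPowerGap hdist hpos hlt
      (not_isPowerGap_sixFreePart_dist_lucas hn hn₁ hne)
    omega
  constructor
  · exact (Nat.pow_lt_pow_iff_right one_lt_two).1
      ((Nat.le_mul_of_pos_right _ (by positivity)).trans_lt hsize)
  · exact (Nat.pow_lt_pow_iff_right (by norm_num : 1 < 3)).1
      ((Nat.le_mul_of_pos_left _ (by positivity)).trans_lt (hsize.trans (by norm_num)))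

theorem neg_c_small_n_xy_bound (c : ℤ) (hc : c < 0) (n n₁ x x₁ y y₁ : ℕ)
    (h1 : c = lucas n - 2 ^ x * 3 ^ y) (h2 : c = lucas n₁ - 2 ^ x₁ * 3 ^ y₁)
    (hnn : n₁ < n) (hn : n ≤ 500) :
    x < 382 ∧ y < 241 := by
  have := neg_c_small_n_xy_bound_general c n n₁ x x₁ y y₁ h1 h2 hnn.ne' hn (hnn.le.trans hn)
  omega
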